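/- arXiv:1704.05641 — 3 statements merged into one kernel-verified Lean document; each statement's English description precedes it below -/
import Mathlib

section
/- If O ⊆ F is a reasonable solution of the constructed MUFL instance, then φ_FL(C,F,O) = 3N + M + (1/W)·Σ_{b_m∈B} w(b_m) + ((c−1)/W)·Σ_{b_m∈B_f(T_O)} w(b_m). -/
open Finset
open scoped ENNReal

/-- A literal over `N` variables: a variable index together with a polarity
(`true` = positive literal `x_n`, `false` = negated literal `x̄_n`). -/
abbrev Lit (N : ℕ) := Fin N × Bool

/-- The negation of a literal. -/
def Lit.neg {N : ℕ} (p : Lit N) : Lit N := (p.1, !p.2)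

/-- A 2-SAT clause: two literals over distinct variables. -/
structure Clause (N : ℕ) where
  l1 : Lit N
  l2 : Lit N
  distinct : l1.1 ≠ l2.1

/-- The literal `p` occurs in the clause `cl`. -/
def Clause.occurs {N : ℕ} (p : Lit N) (cl : Clause N) : Prop := p = cl.l1 ∨ p = cl.l2

instance {N : ℕ} (p : Lit N) (cl : Clause N) : Decidable (Clause.occurs p cl) := by
  unfold Clause.occurs; infer_instance

/-- The truth assignment `T` satisfies the clause `cl`. -/
def Clause.satisfied {N : ℕ} (T : Fin N → Bool) (cl : Clause N) : Prop :=
  T cl.l1.1 = cl.l1.2 ∨ T cl.l2.1 = cl.l2.2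

instance {N : ℕ} (T : Fin N → Bool) (cl : Clause N) : Decidable (Clause.satisfied T cl) := by
  unfold Clause.satisfied; infer_instance

/-- The point set of the construction: one point per literal (facility/literal points)
and one point per clause. -/
abbrev Pt (N M : ℕ) := Lit N ⊕ Fin M

/-- The SAT cost `w(B,T)`: total weight of the clauses satisfied by `T`. -/
def satCost {N M : ℕ} (b : Fin M → Clause N) (w : Fin M → ℕ) (T : Fin N → Bool) : ℕ :=
  ∑ m ∈ Finset.univ.filter (fun m => Clause.satisfied T (b m)), w m

/-- The distance function of the constructed MUFL instance. -/
noncomputable def dFL {N M : ℕ} (b : Fin M → Clause N) (w : Fin M → ℕ) (W c : ℝ) :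
    Pt N M → Pt N M → ℝ := fun p q =>
  if p = q then 0
  else
    match p, q with
    | Sum.inl x, Sum.inl y => if x.1 = y.1 then 1 else 2
    | Sum.inl x, Sum.inr m =>
        if Clause.occurs x (b m) then 1 + (w m : ℝ) / W
        else if Clause.occurs (Lit.neg x) (b m) then 1 + c * (w m : ℝ) / W
        else 2
    | Sum.inr m, Sum.inl x =>
        if Clause.occurs x (b m) then 1 + (w m : ℝ) / W
        else if Clause.occurs (Lit.neg x) (b m) then 1 + c * (w m : ℝ) / W
        else 2
    | Sum.inr _, Sum.inr _ => 2

/-- The MUFL cost `φ_FL(C,F,O)` of a set of open facilities `O`: every client connects to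
the nearest open facility (`∞` if no facility is open), plus opening cost `2` per
open facility. -/
noncomputable def phiFL {N M : ℕ} (d : Pt N M → Pt N M → ℝ) (O : Finset (Lit N)) : ℝ≥0∞ :=
  (∑ p : Pt N M, ⨅ o ∈ O, ENNReal.ofReal (d p (Sum.inl o))) + 2 * (O.card : ℝ≥0∞)

/-- A set of open facilities is reasonable if it has size `N` and contains a facility
corresponding to each variable. -/
def ReasonableFL {N : ℕ} (O : Finset (Lit N)) : Prop :=
  O.card = N ∧ ∀ n : Fin N, (n, true) ∈ O ∨ (n, false) ∈ O

/-- The truth assignment `T_O` induced by a set of open facilities: `x_n` is true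
iff the facility `x_n` is open. -/
def assignOf {N : ℕ} (O : Finset (Lit N)) : Fin N → Bool :=
  fun n => decide ((n, true) ∈ O)

/-!
A reasonable solution consists of exactly the literals made true by `T_O`. The true literals serve
themselves at distance `0` and the false ones are served by their negations at distance `1`, so the
literal clients cost `N`; opening costs `2N`. A clause client is served by a true literal occurring
in it, if there is one, and otherwise by the negation of one of its literals, since `c * w ≤ W`
makes `1 + c * w / W` at most the distance `2` to unrelated facilities. An unsatisfied clause
therefore pays `(c - 1) * w / W` more than a satisfied one of the same weight.
-/

lemma mul_natCast_le_mul_sup {ι R : Type*} [Semiring R] [PartialOrder R] [IsOrderedRing R]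
    {s : Finset ι} (w : ι → ℕ) {a k : R} (hak : a ≤ k) (hk : 0 ≤ k) {i : ι} (hi : i ∈ s) :
    a * w i ≤ k * (s.sup w : ℕ) := by
  gcongr
  exact le_sup hi

/-- The literals true under the assignment `T`, which are the facilities that a reasonable solution
inducing `T` opens. -/
def trueLits {N : ℕ} (T : Fin N → Bool) : Finset (Lit N) :=
  univ.image fun n => (n, T n)

/-- The cost of serving the client `p` from its nearest open facility, that is, the summand of
`phiFL` contributed by `p`; it is `∞` if no facility is open. -/
noncomputable def connectionCost {N M : ℕ} (d : Pt N M → Pt N M → ℝ) (O : Finset (Lit N))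
    (p : Pt N M) : ℝ≥0∞ :=
  ⨅ o ∈ O, ENNReal.ofReal (d p (Sum.inl o))

section TrueLits

variable {N : ℕ} {T : Fin N → Bool} {p : Lit N} {cl : Clause N}

lemma mem_trueLits : p ∈ trueLits T ↔ T p.1 = p.2 := by
  simp [trueLits, Prod.ext_iff]

lemma card_trueLits (T : Fin N → Bool) : #(trueLits T) = N := by
  rw [trueLits, card_image_of_injective _ fun _ _ h => congrArg Prod.fst h, card_fin]

lemma card_compl_trueLits (T : Fin N → Bool) : #(trueLits T)ᶜ = N := by
  rw [card_compl, card_trueLits, Fintype.card_prod, Fintype.card_fin, Fintype.card_bool]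
  lia

lemma Lit.neg_neg (p : Lit N) : p.neg.neg = p := by
  simp [Lit.neg]

lemma neg_mem_trueLits : p.neg ∈ trueLits T ↔ p ∉ trueLits T := by
  simp [mem_trueLits, Lit.neg, Bool.eq_not]

lemma Clause.satisfied_iff_exists_mem_trueLits :
    cl.satisfied T ↔ ∃ p ∈ trueLits T, Clause.occurs p cl := by
  simp [Clause.satisfied, Clause.occurs, ← mem_trueLits, and_or_left, exists_or]

lemma ReasonableFL.trueLits_assignOf {O : Finset (Lit N)} (hO : ReasonableFL O) :
    trueLits (assignOf O) = O := by
  refine eq_of_subset_of_card_le (fun ⟨n, v⟩ hp => ?_) (by rw [card_trueLits, hO.1])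
  obtain rfl : assignOf O n = v := mem_trueLits.1 hp
  by_cases h : (n, true) ∈ O
  · simp [assignOf, h]
  · simpa [assignOf, h] using (hO.2 n).resolve_left h

end TrueLits

lemma phiFL_eq_sum_connectionCost {N M : ℕ} (d : Pt N M → Pt N M → ℝ) (O : Finset (Lit N)) :
    phiFL d O = ∑ x, connectionCost d O (Sum.inl x) + ∑ m, connectionCost d O (Sum.inr m) +
      2 * (#O : ℝ≥0∞) := by
  rw [phiFL, Fintype.sum_sum_type]
  rfl

lemma connectionCost_eq_ofReal {N M : ℕ} {d : Pt N M → Pt N M → ℝ} {O : Finset (Lit N)}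
    {p : Pt N M} {o : Lit N} {r : ℝ} (ho : o ∈ O) (hr : d p (Sum.inl o) = r)
    (hmin : ∀ q ∈ O, r ≤ d p (Sum.inl q)) :
    connectionCost d O p = ENNReal.ofReal r :=
  le_antisymm (hr ▸ iInf₂_le o ho) (le_iInf₂ fun q hq => ENNReal.ofReal_le_ofReal (hmin q hq))

section Construction

variable {N M : ℕ} (b : Fin M → Clause N) (w : Fin M → ℕ) (W c : ℝ)

section Literals

lemma dFL_self (p : Pt N M) : dFL b w W c p p = 0 := by
  simp [dFL]

lemma dFL_lit_neg (x : Lit N) : dFL b w W c (Sum.inl x) (Sum.inl x.neg) = 1 := by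
  simp [dFL, Lit.neg, Prod.ext_iff]

lemma dFL_lit_lit_nonneg (x y : Lit N) : 0 ≤ dFL b w W c (Sum.inl x) (Sum.inl y) := by
  simp only [dFL]
  split_ifs <;> norm_num

variable {x y : Lit N}

lemma one_le_dFL_lit_lit (hxy : x ≠ y) : 1 ≤ dFL b w W c (Sum.inl x) (Sum.inl y) := by
  simp only [dFL, Sum.inl.injEq, hxy, if_false]
  split_ifs <;> norm_num

variable {T : Fin N → Bool}

lemma connectionCost_lit_of_mem (hx : x ∈ trueLits T) :
    connectionCost (dFL b w W c) (trueLits T) (Sum.inl x) = 0 := by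
  rw [connectionCost_eq_ofReal hx (dFL_self b w W c _) fun y _ => dFL_lit_lit_nonneg b w W c x y,
    ENNReal.ofReal_zero]

lemma connectionCost_lit_of_notMem (hx : x ∉ trueLits T) :
    connectionCost (dFL b w W c) (trueLits T) (Sum.inl x) = 1 := by
  rw [connectionCost_eq_ofReal (neg_mem_trueLits.2 hx) (dFL_lit_neg b w W c x) fun y hy =>
    one_le_dFL_lit_lit b w W c (ne_of_mem_of_not_mem hy hx).symm, ENNReal.ofReal_one]

lemma sum_connectionCost_lit (T : Fin N → Bool) :
    ∑ x : Lit N, connectionCost (dFL b w W c) (trueLits T) (Sum.inl x) = N := by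
  have hcost (x : Lit N) : connectionCost (dFL b w W c) (trueLits T) (Sum.inl x) =
      if x ∈ (trueLits T)ᶜ then 1 else 0 := by
    split_ifs with hx
    · exact connectionCost_lit_of_notMem b w W c (mem_compl.1 hx)
    · exact connectionCost_lit_of_mem b w W c (notMem_compl.1 hx)
  simp_rw [hcost]
  rw [sum_boole, filter_univ_mem, card_compl_trueLits]

end Literals

section Clauses

variable {b w W c} {m : Fin M} {x : Lit N}

lemma dFL_clause_of_occurs (hx : Clause.occurs x (b m)) :
    dFL b w W c (Sum.inr m) (Sum.inl x) = 1 + w m / W := by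
  simp [dFL, hx]

lemma dFL_clause_of_occurs_neg (hx : ¬ Clause.occurs x (b m))
    (hneg : Clause.occurs x.neg (b m)) :
    dFL b w W c (Sum.inr m) (Sum.inl x) = 1 + c * w m / W := by
  simp [dFL, hx, hneg]

lemma le_dFL_clause_of_not_occurs (hW : 0 < W) (hcw : c * w m ≤ W)
    (hx : ¬ Clause.occurs x (b m)) :
    1 + c * w m / W ≤ dFL b w W c (Sum.inr m) (Sum.inl x) := by
  have hle : c * w m / W ≤ 1 := (div_le_one hW).2 hcw
  simp only [dFL, reduceCtorEq, if_false, hx]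
  split_ifs <;> linarith

lemma le_dFL_clause (hc : 1 ≤ c) (hW : 0 < W) (hcw : c * w m ≤ W) (x : Lit N) :
    1 + w m / W ≤ dFL b w W c (Sum.inr m) (Sum.inl x) := by
  by_cases hx : Clause.occurs x (b m)
  · exact (dFL_clause_of_occurs hx).ge
  · calc (1 : ℝ) + w m / W ≤ 1 + c * w m / W := by
          gcongr
          exact le_mul_of_one_le_left (Nat.cast_nonneg _) hc
      _ ≤ dFL b w W c (Sum.inr m) (Sum.inl x) := le_dFL_clause_of_not_occurs hW hcw hx

variable {T : Fin N → Bool}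

lemma connectionCost_clause_of_satisfied (hc : 1 ≤ c) (hW : 0 < W) (hcw : c * w m ≤ W)
    (hT : (b m).satisfied T) :
    connectionCost (dFL b w W c) (trueLits T) (Sum.inr m) = ENNReal.ofReal (1 + w m / W) := by
  obtain ⟨x, hxT, hx⟩ := Clause.satisfied_iff_exists_mem_trueLits.1 hT
  exact connectionCost_eq_ofReal hxT (dFL_clause_of_occurs hx) fun y _ =>
    le_dFL_clause hc hW hcw y

lemma connectionCost_clause_of_not_satisfied (hW : 0 < W) (hcw : c * w m ≤ W)
    (hT : ¬ (b m).satisfied T) :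
    connectionCost (dFL b w W c) (trueLits T) (Sum.inr m) =
      ENNReal.ofReal (1 + c * w m / W) := by
  have hnot (y) (hy : y ∈ trueLits T) : ¬ Clause.occurs y (b m) := fun h =>
    hT (Clause.satisfied_iff_exists_mem_trueLits.2 ⟨y, hy, h⟩)
  have hocc : Clause.occurs (b m).l1 (b m) := Or.inl rfl
  have hneg : (b m).l1.neg ∈ trueLits T := neg_mem_trueLits.2 fun h => hnot _ h hocc
  exact connectionCost_eq_ofReal hneg
    (dFL_clause_of_occurs_neg (hnot _ hneg) (by rwa [Lit.neg_neg]))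
    fun y hy => le_dFL_clause_of_not_occurs hW hcw (hnot y hy)

lemma connectionCost_clause (hc : 1 ≤ c) (hW : 0 < W) (hcw : c * w m ≤ W)
    (T : Fin N → Bool) :
    connectionCost (dFL b w W c) (trueLits T) (Sum.inr m) = ENNReal.ofReal
      (1 + 1 / W * w m + (c - 1) / W * if ¬ (b m).satisfied T then (w m : ℝ) else 0) := by
  by_cases hT : (b m).satisfied T
  · rw [connectionCost_clause_of_satisfied hc hW hcw hT, if_neg (not_not.2 hT)]
    ring_nf
  · rw [connectionCost_clause_of_not_satisfied hW hcw hT, if_pos hT]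
    ring_nf

lemma sum_connectionCost_clause (hc : 1 ≤ c) (hW : 0 < W) (hcw : ∀ m, c * w m ≤ W)
    (T : Fin N → Bool) :
    ∑ m, connectionCost (dFL b w W c) (trueLits T) (Sum.inr m) = ENNReal.ofReal
      (M + 1 / W * ∑ m, (w m : ℝ) + (c - 1) / W * ∑ m with ¬ (b m).satisfied T, (w m : ℝ)) := by
  have : 0 ≤ c - 1 := sub_nonneg.2 hc
  simp only [connectionCost_clause hc hW (hcw _)]
  rw [← ENNReal.ofReal_sum_of_nonneg fun m _ => by positivity, sum_add_distrib,
    sum_add_distrib, ← mul_sum, ← mul_sum, ← sum_filter, sum_const, card_fin, nsmul_one]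

end Clauses

end Construction

theorem phiFL_of_reasonable_general {N M : ℕ} (b : Fin M → Clause N) (w : Fin M → ℕ) {c W : ℝ}
    (hc : 1 ≤ c) (hW : 0 < W) (hcw : ∀ m, c * w m ≤ W) {O : Finset (Lit N)}
    (hO : ReasonableFL O) :
    phiFL (dFL b w W c) O = ENNReal.ofReal (3 * N + M + 1 / W * ∑ m, (w m : ℝ) +
      (c - 1) / W * ∑ m with ¬ (b m).satisfied (assignOf O), (w m : ℝ)) := by
  have hlit := sum_connectionCost_lit b w W c (assignOf O)
  have hclause := sum_connectionCost_clause (b := b) hc hW hcw (assignOf O)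
  rw [hO.trueLits_assignOf] at hlit hclause
  rw [← ENNReal.ofReal_natCast] at hlit
  have hopen : 2 * (#O : ℝ≥0∞) = ENNReal.ofReal (2 * N) := by
    simp [hO.1, ENNReal.ofReal_mul]
  have : 0 ≤ c - 1 := sub_nonneg.2 hc
  rw [phiFL_eq_sum_connectionCost, hlit, hclause, hopen,
    ← ENNReal.ofReal_add (by positivity) (by positivity),
    ← ENNReal.ofReal_add (by positivity) (by positivity)]
  ring_nf

/-- The MUFL cost of a reasonable solution. -/
theorem phiFL_of_reasonable {N M : ℕ} (hM : 2 ≤ M) (b : Fin M → Clause N) (w : Fin M → ℕ)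
    (hw : ∀ m, 0 < w m) (c : ℝ) (hc1 : 1 < c) (hc2 : c < 2)
    (W : ℝ) (hW : W = (M : ℝ) * ((Finset.univ.sup w : ℕ) : ℝ))
    (O : Finset (Lit N)) (hO : ReasonableFL O) :
    phiFL (dFL b w W c) O = ENNReal.ofReal (
      3 * (N : ℝ) + (M : ℝ) + (1 / W) * (∑ m, (w m : ℝ)) +
      ((c - 1) / W) * (∑ m ∈ Finset.univ.filter
        (fun m => ¬ Clause.satisfied (assignOf O) (b m)), (w m : ℝ))) := by
  have hM' : (2 : ℝ) ≤ M := mod_cast hM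
  have hcw (m) : c * w m ≤ W :=
    hW ▸ mul_natCast_le_mul_sup w (hc2.le.trans hM') (Nat.cast_nonneg M) (mem_univ m)
  have hw₀ : 0 < c * w ⟨0, by lia⟩ := mul_pos (by linarith) (mod_cast hw _)
  exact phiFL_of_reasonable_general b w hc1.le (hw₀.trans_le (hcw _)) hcw hO
end

section
/- If O and O' are reasonable solutions of the constructed DKM instance, then w(B, T_O) < w(B, T_{O'}) if and only if φ_KM(C,O) > φ_KM(C,O'). -/
open Finset
open scoped ENNReal

/-- The distance function of the constructed DKM instance. -/
noncomputable def dKM {N M : ℕ} (b : Fin M → Clause N) (w : Fin M → ℕ) (W c ε : ℝ) :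
    Pt N M → Pt N M → ℝ := fun p q =>
  if p = q then 0
  else
    match p, q with
    | Sum.inl x, Sum.inl y => if x.1 = y.1 then 1 else 1 + 2 * ε
    | Sum.inl x, Sum.inr m =>
        if Clause.occurs x (b m) then 1 + ε * (3 / 2 + (w m : ℝ) / (2 * W))
        else if Clause.occurs (Lit.neg x) (b m) then 1 + ε * (3 / 2 + c * (w m : ℝ) / (2 * W))
        else 1 + 2 * ε
    | Sum.inr m, Sum.inl x =>
        if Clause.occurs x (b m) then 1 + ε * (3 / 2 + (w m : ℝ) / (2 * W))
        else if Clause.occurs (Lit.neg x) (b m) then 1 + ε * (3 / 2 + c * (w m : ℝ) / (2 * W))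
        else 1 + 2 * ε
    | Sum.inr _, Sum.inr _ => 1 + 2 * ε

/-- The K-means cost `φ_KM(C,O)` of a set of open locations `O ⊆ C`: every point connects
to the nearest open location (`∞` if `O = ∅`). -/
noncomputable def phiKM {N M : ℕ} (d : Pt N M → Pt N M → ℝ) (O : Finset (Pt N M)) : ℝ≥0∞ :=
  ∑ p : Pt N M, ⨅ o ∈ O, ENNReal.ofReal (d p o)

/-- A set `O ⊆ C` is reasonable if it consists of literal points only, has size `N`,
and contains a point corresponding to each variable. -/
def ReasonableKM {N M : ℕ} (O : Finset (Pt N M)) : Prop :=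
  (∀ p ∈ O, ∃ l : Lit N, p = Sum.inl l) ∧ O.card = N ∧
    ∀ n : Fin N, Sum.inl (n, true) ∈ O ∨ Sum.inl (n, false) ∈ O

/-- The truth assignment `T_O` induced by a set `O ⊆ C`: `x_n` is true iff the point
`x_n` is in `O`. -/
def assignOfKM {N M : ℕ} (O : Finset (Pt N M)) : Fin N → Bool :=
  fun n => decide (Sum.inl (n, true) ∈ O)

/-!
A reasonable set opens exactly the literals made true by its assignment, which cost nothing. Every
other literal is served by its open negation at cost `1`, and a clause is served by a true literal
occurring in it if there is one, and by the negation of one of its literals otherwise. Satisfying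
`b_m` thus saves exactly `ε (c - 1) w(b_m) / (2W)`, so the cost is a constant minus a positive
multiple of the SAT cost. -/

namespace Clause

variable {N : ℕ} {T : Fin N → Bool} {cl : Clause N}

theorem satisfied_iff_exists_occurs : cl.satisfied T ↔ ∃ n, occurs (n, T n) cl := by
  constructor
  · rintro (h | h)
    · exact ⟨cl.l1.1, Or.inl (Prod.ext rfl h)⟩
    · exact ⟨cl.l2.1, Or.inr (Prod.ext rfl h)⟩
  · rintro ⟨n, h | h⟩
    · left; rw [← h]
    · right; rw [← h]

theorem exists_occurs_neg_of_not_satisfied (h : ¬ cl.satisfied T) :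
    ∃ n, occurs (Lit.neg (n, T n)) cl := by
  have hl1 : T cl.l1.1 ≠ cl.l1.2 := fun h1 => h (Or.inl h1)
  exact ⟨cl.l1.1, Or.inl (Prod.ext rfl (Bool.not_eq.mpr hl1))⟩

theorem isLeast_range_ite_occurs {α : Type*} [Preorder α] {r s t : α} (hrs : r ≤ s) (hst : s ≤ t)
    (T : Fin N → Bool) (cl : Clause N) :
    IsLeast
      (Set.range fun n => if occurs (n, T n) cl then r
        else if occurs (Lit.neg (n, T n)) cl then s else t)
      (if cl.satisfied T then r else s) := by
  by_cases hsat : cl.satisfied T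
  · obtain ⟨n, hn⟩ := satisfied_iff_exists_occurs.mp hsat
    rw [if_pos hsat]
    refine ⟨⟨n, if_pos hn⟩, ?_⟩
    rintro _ ⟨k, rfl⟩
    dsimp only
    split_ifs
    exacts [le_rfl, hrs, hrs.trans hst]
  · obtain ⟨n, hn⟩ := exists_occurs_neg_of_not_satisfied hsat
    have hocc (k : Fin N) : ¬ occurs (k, T k) cl :=
      fun hk => hsat (satisfied_iff_exists_occurs.mpr ⟨k, hk⟩)
    simp only [hocc, hsat, if_false]
    refine ⟨⟨n, if_pos hn⟩, ?_⟩
    rintro _ ⟨k, rfl⟩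
    dsimp only
    split_ifs
    exacts [le_rfl, hst]

end Clause

section TrueLiterals

variable {N M : ℕ}

/-- The literal points `x_n` or `x̄_n` that the assignment `T` makes true: the canonical reasonable
set inducing `T`. -/
def trueLiterals (T : Fin N → Bool) : Finset (Pt N M) :=
  univ.image fun n => Sum.inl (n, T n)

theorem image_trueLiterals {α : Type*} (f : Pt N M → α) (T : Fin N → Bool) :
    f '' (trueLiterals T : Finset (Pt N M)) = Set.range fun n => f (Sum.inl (n, T n)) := by
  rw [trueLiterals, coe_image, coe_univ, Set.image_univ, ← Set.range_comp]
  rfl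

theorem card_trueLiterals (T : Fin N → Bool) : (trueLiterals T : Finset (Pt N M)).card = N := by
  have hinj : Function.Injective fun n => (Sum.inl (n, T n) : Pt N M) :=
    fun _ _ h => congrArg Prod.fst (Sum.inl_injective h)
  rw [trueLiterals, card_image_of_injective _ hinj, card_fin]

theorem ReasonableKM.eq_trueLiterals {O : Finset (Pt N M)} (hO : ReasonableKM O) :
    O = trueLiterals (assignOfKM O) := by
  obtain ⟨-, hcard, hcover⟩ := hO
  refine (eq_of_subset_of_card_le (image_subset_iff.mpr fun n _ => ?_) ?_).symm
  · by_cases h : Sum.inl (n, true) ∈ O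
    · simp [assignOfKM, h]
    · simpa [assignOfKM, h] using (hcover n).resolve_left h
  · exact (hcard.trans (card_trueLiterals _).symm).le

end TrueLiterals

theorem phiKM_eq_ofReal_sum {N M : ℕ} {d : Pt N M → Pt N M → ℝ} {O : Finset (Pt N M)}
    {r : Pt N M → ℝ} (hr : ∀ p, IsLeast (d p '' O) (r p)) (hr0 : ∀ p, 0 ≤ r p) :
    phiKM d O = ENNReal.ofReal (∑ p, r p) := by
  rw [ENNReal.ofReal_sum_of_nonneg fun p _ => hr0 p, phiKM]
  refine sum_congr rfl fun p _ => ?_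
  have hleast := ENNReal.ofReal_mono.map_isLeast (hr p)
  rw [← hleast.isGLB.sInf_eq, Set.image_image, sInf_image]
  simp only [mem_coe]

section ClauseDist

variable {ε W u v : ℝ}

/-- The distance `1 + ε (3/2 + v / (2W))` at which the construction puts a clause from a literal:
`v = w(b_m)` for a literal occurring in `b_m`, and `v = c w(b_m)` for the negation of one. -/
noncomputable def clauseDist (ε W v : ℝ) : ℝ := 1 + ε * (3 / 2 + v / (2 * W))

theorem clauseDist_le_clauseDist (hε : 0 ≤ ε) (hW : 0 ≤ W) (huv : u ≤ v) :
    clauseDist ε W u ≤ clauseDist ε W v := by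
  unfold clauseDist
  gcongr

theorem clauseDist_le_one_add (hε : 0 ≤ ε) (hW : 0 < W) (hv : v ≤ W) :
    clauseDist ε W v ≤ 1 + 2 * ε :=
  calc clauseDist ε W v ≤ clauseDist ε W W := clauseDist_le_clauseDist hε hW.le hv
    _ = 1 + 2 * ε := by unfold clauseDist; field_simp; ring

theorem clauseDist_nonneg (hε : 0 ≤ ε) (hW : 0 ≤ W) (hv : 0 ≤ v) : 0 ≤ clauseDist ε W v := by
  unfold clauseDist
  positivity

end ClauseDist

section ConnCost

variable {N M : ℕ} (b : Fin M → Clause N) (w : Fin M → ℕ) {W c ε : ℝ} (T : Fin N → Bool)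

variable (W c ε) in
/-- The cost of connecting a point to the nearest literal made true by `T`, valid as such in the
range `1 ≤ c`, `c w(b_m) ≤ W`, where satisfied clauses are the closer ones. -/
noncomputable def connCost : Pt N M → ℝ
  | Sum.inl x => if T x.1 = x.2 then 0 else 1
  | Sum.inr m =>
      if (b m).satisfied T then clauseDist ε W (w m) else clauseDist ε W (c * w m)

theorem connCost_nonneg (hc : 0 ≤ c) (hW : 0 ≤ W) (hε : 0 ≤ ε) (p : Pt N M) :
    0 ≤ connCost b w W c ε T p := by
  rcases p with x | m <;> simp only [connCost] <;> split_ifs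
  · exact le_rfl
  · exact zero_le_one
  · exact clauseDist_nonneg hε hW (by positivity)
  · exact clauseDist_nonneg hε hW (by positivity)

theorem isLeast_dKM_literal (hε : 0 ≤ ε) (x : Lit N) :
    IsLeast (dKM b w W c ε (Sum.inl x) '' (trueLiterals T : Finset (Pt N M)))
      (connCost b w W c ε T (Sum.inl x)) := by
  obtain ⟨n, s⟩ := x
  rw [image_trueLiterals]
  refine ⟨⟨n, ?_⟩, ?_⟩
  · simp [dKM, connCost, eq_comm]
  · rintro _ ⟨k, rfl⟩
    by_cases hnk : n = k
    · subst hnk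
      simp [dKM, connCost, eq_comm]
    · simp only [dKM, connCost, Sum.inl.injEq, Prod.mk.injEq, hnk, false_and, if_false]
      split_ifs <;> linarith

theorem isLeast_dKM_clause (hc : 1 ≤ c) (hW : 0 < W) (hε : 0 ≤ ε) {m : Fin M}
    (hcw : c * w m ≤ W) :
    IsLeast (dKM b w W c ε (Sum.inr m) '' (trueLiterals T : Finset (Pt N M)))
      (connCost b w W c ε T (Sum.inr m)) := by
  rw [image_trueLiterals]
  have hw : (w m : ℝ) ≤ c * w m := le_mul_of_one_le_left (Nat.cast_nonneg _) hc
  exact Clause.isLeast_range_ite_occurs (clauseDist_le_clauseDist hε hW.le hw)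
    (clauseDist_le_one_add hε hW hcw) T (b m)

theorem phiKM_trueLiterals (hc : 1 ≤ c) (hW : 0 < W) (hε : 0 ≤ ε) (hcw : ∀ m, c * w m ≤ W) :
    phiKM (dKM b w W c ε) (trueLiterals T) = ENNReal.ofReal (∑ p, connCost b w W c ε T p) := by
  refine phiKM_eq_ofReal_sum ?_ (connCost_nonneg b w T (zero_le_one.trans hc) hW.le hε)
  rintro (x | m)
  exacts [isLeast_dKM_literal b w T hε x, isLeast_dKM_clause b w T hc hW hε (hcw m)]

theorem sum_connCost_literal : ∑ x : Lit N, connCost b w W c ε T (Sum.inl x) = N := by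
  have hpair (n : Fin N) : ∑ s : Bool, connCost b w W c ε T (Sum.inl (n, s)) = 1 := by
    cases h : T n <;> simp [connCost, h]
  rw [Fintype.sum_prod_type, sum_congr rfl fun n _ => hpair n]
  simp only [sum_const, card_univ, Fintype.card_fin, nsmul_eq_mul, mul_one]

theorem sum_connCost_clause :
    ∑ m : Fin M, connCost b w W c ε T (Sum.inr m) =
      ∑ m, clauseDist ε W (c * w m) - ε * (c - 1) / (2 * W) * satCost b w T := by
  rw [satCost, Nat.cast_sum, sum_filter, mul_sum, ← sum_sub_distrib]
  refine sum_congr rfl fun m _ => ?_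
  simp only [connCost, clauseDist]
  split_ifs <;> ring

theorem sum_connCost :
    ∑ p, connCost b w W c ε T p =
      N + ∑ m, clauseDist ε W (c * w m) - ε * (c - 1) / (2 * W) * satCost b w T := by
  rw [Fintype.sum_sum_type, sum_connCost_literal, sum_connCost_clause, add_sub_assoc]

theorem sum_connCost_lt_sum_connCost_iff (hc : 1 < c) (hW : 0 < W) (hε : 0 < ε)
    (T T' : Fin N → Bool) :
    ∑ p, connCost b w W c ε T' p < ∑ p, connCost b w W c ε T p ↔
      satCost b w T < satCost b w T' := by
  have hsaving : 0 < ε * (c - 1) / (2 * W) :=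
    div_pos (mul_pos hε (sub_pos.mpr hc)) (mul_pos two_pos hW)
  rw [sum_connCost, sum_connCost, sub_lt_sub_iff_left, mul_lt_mul_iff_right₀ hsaving, Nat.cast_lt]

end ConnCost

theorem mul_le_card_mul_sup {M : ℕ} (w : Fin M → ℕ) {c : ℝ} (hc : c ≤ M) (m : Fin M) :
    c * w m ≤ M * (univ.sup w : ℕ) := by
  have hm : w m ≤ univ.sup w := le_sup (mem_univ m)
  gcongr

theorem satCost_lt_iff_phiKM_gt_general {N M : ℕ} (b : Fin M → Clause N) (w : Fin M → ℕ)
    {c W ε : ℝ} (hc : 1 < c) (hW : 0 < W) (hcw : ∀ m, c * w m ≤ W) (hε : 0 < ε)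
    {O O' : Finset (Pt N M)} (hO : ReasonableKM O) (hO' : ReasonableKM O') :
    satCost b w (assignOfKM O) < satCost b w (assignOfKM O') ↔
      phiKM (dKM b w W c ε) O' < phiKM (dKM b w W c ε) O := by
  have hphi {Q : Finset (Pt N M)} (hQ : ReasonableKM Q) :
      phiKM (dKM b w W c ε) Q = ENNReal.ofReal (∑ p, connCost b w W c ε (assignOfKM Q) p) := by
    conv_lhs => rw [hQ.eq_trueLiterals]
    exact phiKM_trueLiterals b w _ hc.le hW hε.le hcw
  have hnonneg : 0 ≤ ∑ p, connCost b w W c ε (assignOfKM O') p :=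
    sum_nonneg fun p _ => connCost_nonneg b w _ (zero_le_one.trans hc.le) hW.le hε.le p
  rw [hphi hO, hphi hO', ENNReal.ofReal_lt_ofReal_iff_of_nonneg hnonneg,
    sum_connCost_lt_sum_connCost_iff b w hc hW hε]

/-- For reasonable DKM solutions, the SAT cost order is reversed by the DKM
cost order. -/
theorem satCost_lt_iff_phiKM_gt {N M : ℕ} (hM : 2 ≤ M) (b : Fin M → Clause N) (w : Fin M → ℕ)
    (hw : ∀ m, 0 < w m) (c : ℝ) (hc1 : 1 < c) (hc2 : c < 2)
    (W : ℝ) (hW : W = (M : ℝ) * ((Finset.univ.sup w : ℕ) : ℝ))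
    (ε : ℝ) (hε : ε = 1 / (4 * (N : ℝ) + 2 * (M : ℝ)))
    (O O' : Finset (Pt N M)) (hO : ReasonableKM O) (hO' : ReasonableKM O') :
    satCost b w (assignOfKM O) < satCost b w (assignOfKM O') ↔
      phiKM (dKM b w W c ε) O' < phiKM (dKM b w W c ε) O := by
  have hMc : c ≤ M := hc2.le.trans (by exact_mod_cast hM)
  have hcw (m : Fin M) : c * w m ≤ W := hW ▸ mul_le_card_mul_sup w hMc m
  have hw0 : 0 < c * w ⟨0, by omega⟩ :=
    mul_pos (zero_lt_one.trans hc1) (Nat.cast_pos.mpr (hw _))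
  have hε0 : 0 < ε := by rw [hε]; positivity
  exact satCost_lt_iff_phiKM_gt_general b w hc1 (hw0.trans_le (hcw _)) hcw hε0 hO hO'
end

section
/- There is no isometric embedding of the constructed DKM point set C into squared Euclidean space of dimension less than max{N, M} − 1. That is, if f : C → ℝ^D satisfies ‖f(p) − f(q)‖² = d(p,q) for all p, q ∈ C, then D ≥ max{N, M} − 1. -/
open Finset
open scoped ENNReal

/-! The positive literals are pairwise at squared distance `1 + 2ε`, and so are the clause points.
An equidistant family is affinely independent: for weights `a` summing to zero, expanding the
squared norm of `∑ aᵢ pᵢ` in the pairwise squared distances `s` gives `(s / 2) ∑ aᵢ²`. -/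

section Equidistant

variable {ι V P : Type*} [NormedAddCommGroup V] [InnerProductSpace ℝ V] [MetricSpace P]
  [NormedAddTorsor V P] {p : ι → P} {s : ℝ}

theorem norm_weightedVSub_sq_of_pairwise_dist_sq_eq
    (hp : Pairwise fun i j => dist (p i) (p j) ^ 2 = s) {t : Finset ι} {a : ι → ℝ}
    (ha : ∑ i ∈ t, a i = 0) : ‖t.weightedVSub p a‖ ^ 2 = s / 2 * ∑ i ∈ t, a i ^ 2 := by
  classical
  have row_sum (i : ι) (hi : i ∈ t) :
      ∑ j ∈ t, a i * a j * (dist (p i) (p j) * dist (p i) (p j)) = -(s * a i ^ 2) := by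
    have erase_sum : ∑ j ∈ t.erase i, a j = -a i := by
      linarith [t.sum_erase_add a hi]
    calc
      _ = ∑ j ∈ t.erase i, a i * a j * (dist (p i) (p j) * dist (p i) (p j)) :=
        (t.sum_erase (by simp)).symm
      _ = ∑ j ∈ t.erase i, a i * s * a j :=
        sum_congr rfl fun j hj => by
          rw [← sq, hp (ne_of_mem_erase hj).symm]
          ring
      _ = -(s * a i ^ 2) := by
        rw [← mul_sum, erase_sum]
        ring
  rw [← real_inner_self_eq_norm_sq, EuclideanGeometry.inner_weightedVSub p ha p ha,
    sum_congr rfl row_sum, sum_neg_distrib, ← mul_sum]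
  ring

theorem affineIndependent_of_pairwise_dist_sq_eq (hs : s ≠ 0)
    (hp : Pairwise fun i j => dist (p i) (p j) ^ 2 = s) : AffineIndependent ℝ p := by
  intro t a ha hv i hi
  have sum_sq : ∑ j ∈ t, a j ^ 2 = 0 := by
    simpa [hv, hs] using norm_weightedVSub_sq_of_pairwise_dist_sq_eq hp ha
  exact pow_eq_zero_iff two_ne_zero |>.mp <|
    (sum_eq_zero_iff_of_nonneg fun j _ => sq_nonneg (a j)).mp sum_sq i hi

theorem card_le_finrank_add_one_of_pairwise_dist_sq_eq [Fintype ι] [FiniteDimensional ℝ V]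
    (hs : s ≠ 0) (hp : Pairwise fun i j => dist (p i) (p j) ^ 2 = s) :
    Fintype.card ι ≤ Module.finrank ℝ V + 1 :=
  (affineIndependent_of_pairwise_dist_sq_eq hs hp).card_le_finrank_succ.trans <|
    Nat.succ_le_succ (Submodule.finrank_le _)

end Equidistant

section Distance

variable {N M : ℕ} (b : Fin M → Clause N) (w : Fin M → ℕ) (W c ε : ℝ)

theorem dKM_inl_inl_of_fst_ne {x y : Lit N} (h : x.1 ≠ y.1) :
    dKM b w W c ε (Sum.inl x) (Sum.inl y) = 1 + 2 * ε := by
  have hxy : x ≠ y := fun e => h (congrArg Prod.fst e)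
  simp [dKM, h, hxy]

theorem dKM_inr_inr_of_ne {m m' : Fin M} (h : m ≠ m') :
    dKM b w W c ε (Sum.inr m) (Sum.inr m') = 1 + 2 * ε := by
  simp [dKM, h]

end Distance

theorem dim_lower_bound_of_embedding_general {N M : ℕ} (b : Fin M → Clause N) (w : Fin M → ℕ)
    (W c ε : ℝ) (hε : 0 < 1 + 2 * ε) {E : Type*} [NormedAddCommGroup E] [InnerProductSpace ℝ E]
    [FiniteDimensional ℝ E] (f : Pt N M → E)
    (hf : ∀ p q : Pt N M, ‖f p - f q‖ ^ 2 = dKM b w W c ε p q) :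
    max N M - 1 ≤ Module.finrank ℝ E := by
  have literals : Pairwise fun i j : Fin N =>
      dist (f (Sum.inl (i, true))) (f (Sum.inl (j, true))) ^ 2 = 1 + 2 * ε := fun i j hij => by
    simpa only [dist_eq_norm, hf] using dKM_inl_inl_of_fst_ne b w W c ε hij
  have clauses : Pairwise fun i j : Fin M =>
      dist (f (Sum.inr i)) (f (Sum.inr j)) ^ 2 = 1 + 2 * ε := fun i j hij => by
    simpa only [dist_eq_norm, hf] using dKM_inr_inr_of_ne b w W c ε hij
  have hN := card_le_finrank_add_one_of_pairwise_dist_sq_eq hε.ne' literals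
  have hM := card_le_finrank_add_one_of_pairwise_dist_sq_eq hε.ne' clauses
  rw [Fintype.card_fin] at hN hM
  exact Nat.sub_le_iff_le_add.mpr (max_le hN hM)

/-- There is no isometric embedding of the DKM point set `C` into squared Euclidean
space of dimension less than `max {N, M} - 1`. -/
theorem dim_lower_bound_of_embedding {N M : ℕ} (hM : 2 ≤ M) (b : Fin M → Clause N) (w : Fin M → ℕ)
    (hw : ∀ m, 0 < w m) (c : ℝ) (hc1 : 1 < c) (hc2 : c < 2)
    (W : ℝ) (hW : W = (M : ℝ) * ((Finset.univ.sup w : ℕ) : ℝ))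
    (ε : ℝ) (hε : ε = 1 / (4 * (N : ℝ) + 2 * (M : ℝ)))
    (D : ℕ) (f : Pt N M → EuclideanSpace ℝ (Fin D))
    (hf : ∀ p q : Pt N M, ‖f p - f q‖ ^ 2 = dKM b w W c ε p q) :
    max N M - 1 ≤ D := by
  have hs : 0 < 1 + 2 * ε := by
    rw [hε]
    positivity
  simpa using dim_lower_bound_of_embedding_general b w W c ε hs f hf
end
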